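/- Let F : S → G(S) be a Markov chain on a measurable space S and let A, B ⊆ S be measurable. Define K_P on the ω-cpo of measurable functions from S to probability distributions on ℕ∪{∞} (ordered pointwise by the stochastic order) by (K_P r)(x) = 1 ⊕ (X r)(x) if x ∈ A∖B, (K_P r)(x) = δ₀ if x ∈ B, and (K_P r)(x) = (X r)(x) otherwise. Then the least fixed point μK_P satisfies ℙ_{s₀}[step_{s₀}^{(A,B)} = m] = (μK_P)(s₀)({m}) for every s₀ ∈ S and every m ∈ ℕ∪{∞}. -/

import Mathlib

open MeasureTheory ProbabilityTheory Set
open scoped ENNReal NNReal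

variable {S : Type*} [MeasurableSpace S]

/-- Prepend an initial state to a trace. -/
def prep (s₀ : S) (ω : ℕ → S) : ℕ → S := fun n => Nat.rec s₀ (fun k _ => ω k) n

/-- `stepCount A B s₀ ω` is the number of indices `i` with
`0 ≤ i < min {j | s_j ∈ B}` and `s_i ∈ A`, where `s₀ s₁ s₂ ⋯` is the trace `ω`
prefixed with the initial state `s₀`. -/
noncomputable def stepCount (A B : Set S) (s₀ : S) (ω : ℕ → S) : ℕ∞ :=
  {i : ℕ | prep s₀ ω i ∈ A ∧ ∀ j ≤ i, prep s₀ ω j ∉ B}.encard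

/-- The stochastic order on distributions over `ℕ∞`:
`ζ₁ ≤ ζ₂` iff `ζ₁([a,∞]) ≤ ζ₂([a,∞])` for all `a ∈ ℕ`. -/
def stochLE (ζ₁ ζ₂ : Measure ℕ∞) : Prop :=
  ∀ a : ℕ, ζ₁ (Ici (a : ℕ∞)) ≤ ζ₂ (Ici (a : ℕ∞))

/-- The next-time operator on distribution-valued functions:
`(𝕏 r)(s)(E) = ∫ r(s')(E) dF(s)(s')`. -/
noncomputable def nextTimeD (F : Kernel S S) (r : S → Measure ℕ∞) : S → Measure ℕ∞ :=
  fun s => (F s : Measure S).bind r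

/-- The shift `1 ⊕ ζ` of a distribution on `ℕ∞`. -/
noncomputable def shift1 (ζ : Measure ℕ∞) : Measure ℕ∞ := ζ.map (· + 1)

open scoped Classical in
/-- The monotone function `K_P` on distribution-valued functions, whose least fixed
point is the distribution of the number of `A`-steps until reaching `B`. -/
noncomputable def KP (F : Kernel S S) (A B : Set S) (r : S → Measure ℕ∞) : S → Measure ℕ∞ :=
  fun x =>
    if x ∈ B then Measure.dirac 0
    else if x ∈ A then shift1 (nextTimeD F r x)
    else nextTimeD F r x

/-!
Write `N_n` for the number of `A`-steps taken before time `n` and before reaching `B`, with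
`n ∈ ℕ∞`, so that `N_∞` is the step count. Conditioning on the first transition shows that the law
of `N_(n+1)` is `K_P` applied to the law of `N_n`. For `n = ∞` this says that the law of `N_∞` is a
fixed point. For finite `n` it gives, by monotonicity of `K_P` and induction from `N_0 = 0`, that
the law of `N_n` lies below every pre-fixed point; since `N_n` increases to `N_∞`, continuity of
measures from below passes this bound on to the law of `N_∞`.
-/

section CompactnessOfFiniteCardinals

theorem natCast_le_iSup_iff {ι : Type*} [Nonempty ι] {f : ι → ℕ∞} {a : ℕ} :
    (a : ℕ∞) ≤ ⨆ i, f i ↔ ∃ i, (a : ℕ∞) ≤ f i := by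
  cases a with
  | zero => simp
  | succ k =>
    simp only [Nat.cast_add, Nat.cast_one, ENat.add_one_le_iff (ENat.natCast_ne_top k),
      lt_iSup_iff]

theorem encard_iUnion_of_directed {α ι : Type*} [Nonempty ι] {s : ι → Set α}
    (hs : Directed (· ⊆ ·) s) : (⋃ i, s i).encard = ⨆ i, (s i).encard := by
  refine le_antisymm ?_ (iSup_le fun i => encard_le_encard (subset_iUnion s i))
  refine ENat.forall_natCast_le_iff_le.mp fun a ha => ?_
  obtain ⟨t, ht, ht_card⟩ := exists_subset_encard_eq ha
  obtain ⟨i, hi⟩ := hs.exists_mem_subset_of_finset_subset_biUnion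
    (s := (finite_of_encard_eq_coe ht_card).toFinset) (by simpa using ht)
  exact natCast_le_iSup_iff.mpr ⟨i, ht_card ▸ encard_le_encard (by simpa using hi)⟩

end CompactnessOfFiniteCardinals

section StochasticOrder

theorem dirac_zero_stochLE (ζ : Measure ℕ∞) [IsProbabilityMeasure ζ] :
    stochLE (Measure.dirac 0) ζ := by
  intro a
  cases a with
  | zero => simp [show Ici (0 : ℕ∞) = univ from Ici_bot]
  | succ k => simp

theorem shift1_mono {ζ₁ ζ₂ : Measure ℕ∞} (h : stochLE ζ₁ ζ₂) :
    stochLE (shift1 ζ₁) (shift1 ζ₂) := by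
  intro a
  -- Truncated subtraction is harmless: at `a = 0` both sides are `univ`.
  have preimage_Ici : (· + 1) ⁻¹' Ici (a : ℕ∞) = Ici ((a - 1 : ℕ) : ℕ∞) := by
    ext x
    simp [tsub_le_iff_right]
  simpa only [shift1, Measure.map_apply .of_discrete .of_discrete, preimage_Ici] using h (a - 1)

theorem nextTimeD_mono {F : Kernel S S} {r₁ r₂ : S → Measure ℕ∞} (hr₂ : Measurable r₂)
    (h : ∀ s, stochLE (r₁ s) (r₂ s)) (s : S) :
    stochLE (nextTimeD F r₁ s) (nextTimeD F r₂ s) := fun a =>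
  calc (F s).bind r₁ (Ici a) ≤ ∫⁻ s', r₁ s' (Ici a) ∂F s := Measure.bind_apply_le _ .of_discrete
    _ ≤ ∫⁻ s', r₂ s' (Ici a) ∂F s := lintegral_mono fun s' => h s' a
    _ = (F s).bind r₂ (Ici a) := (Measure.bind_apply .of_discrete hr₂.aemeasurable).symm

theorem KP_mono {F : Kernel S S} {A B : Set S} {r₁ r₂ : S → Measure ℕ∞} (hr₂ : Measurable r₂)
    (h : ∀ s, stochLE (r₁ s) (r₂ s)) (s : S) : stochLE (KP F A B r₁ s) (KP F A B r₂ s) := by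
  unfold KP
  split_ifs
  · exact fun _ => le_rfl
  · exact shift1_mono (nextTimeD_mono hr₂ h s)
  · exact nextTimeD_mono hr₂ h s

theorem map_iSup_stochLE {Ω ι : Type*} [MeasurableSpace Ω] [Preorder ι] [IsDirectedOrder ι]
    [Nonempty ι] [Countable ι] {μ : Measure Ω} {f : ι → Ω → ℕ∞} {ζ : Measure ℕ∞}
    (hf : ∀ i, Measurable (f i)) (hmono : Monotone f) (h : ∀ i, stochLE (μ.map (f i)) ζ) :
    stochLE (μ.map fun ω => ⨆ i, f i ω) ζ := by
  intro a
  have : BorelSpace ℕ∞ := ⟨borel_eq_top_of_countable.symm⟩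
  have preimage_Ici : (fun ω => ⨆ i, f i ω) ⁻¹' Ici (a : ℕ∞) = ⋃ i, f i ⁻¹' Ici (a : ℕ∞) := by
    ext ω
    simp [natCast_le_iSup_iff]
  have preimage_mono : Monotone fun i => f i ⁻¹' Ici (a : ℕ∞) :=
    fun _ _ hij ω hω => le_trans (mem_Ici.mp hω) (hmono hij ω)
  calc μ.map (fun ω => ⨆ i, f i ω) (Ici a) = μ (⋃ i, f i ⁻¹' Ici (a : ℕ∞)) := by
        rw [Measure.map_apply (.iSup hf) .of_discrete, preimage_Ici]
    _ = ⨆ i, μ.map (f i) (Ici a) := by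
        simp only [preimage_mono.measure_iUnion, Measure.map_apply (hf _) .of_discrete]
    _ ≤ ζ (Ici a) := iSup_le fun i => h i a

end StochasticOrder

section StepTimes

variable {α : Type*} {A B : Set α} {n : ℕ∞} {s : α} {τ : ℕ → α}

/-- The times `i < n` at which the trace `τ` is in `A` and has not yet visited `B`. The horizon `n`
may be `⊤`, so that truncated and untruncated step counts obey a single recursion. -/
def stepTimes (A B : Set α) (n : ℕ∞) (τ : ℕ → α) : Set ℕ :=
  {i | (i : ℕ∞) < n ∧ τ i ∈ A ∧ ∀ j ≤ i, τ j ∉ B}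

/-- The number of `A`-steps of the trace `τ` before time `n` and before reaching `B`. The trace
includes the initial state, in contrast to the argument `ω` of `stepCount`. -/
noncomputable def stepsBefore (A B : Set α) (n : ℕ∞) (τ : ℕ → α) : ℕ∞ :=
  (stepTimes A B n τ).encard

theorem stepCount_eq_stepsBefore_top (s : α) (ω : ℕ → α) :
    stepCount A B s ω = stepsBefore A B ⊤ (prep s ω) := by
  simp [stepCount, stepsBefore, stepTimes]

theorem stepsBefore_zero : stepsBefore A B 0 τ = 0 := by
  simp [stepsBefore, stepTimes]

theorem stepTimes_mono : Monotone fun n => stepTimes A B n τ :=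
  fun _ _ hmn _ hi => ⟨hi.1.trans_le hmn, hi.2⟩

theorem stepsBefore_mono : Monotone (stepsBefore A B) :=
  fun _ _ hmn _ => encard_le_encard (stepTimes_mono hmn)

theorem stepsBefore_top (τ : ℕ → α) :
    stepsBefore A B ⊤ τ = ⨆ n : ℕ, stepsBefore A B n τ := by
  have stepTimes_top : stepTimes A B ⊤ τ = ⋃ n : ℕ, stepTimes A B n τ := by
    ext i
    simpa [stepTimes] using fun _ _ => ⟨i + 1, i.lt_succ_self⟩
  have directed : Directed (· ⊆ ·) fun n : ℕ => stepTimes A B n τ :=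
    (stepTimes_mono.comp Nat.mono_cast).directed_le
  rw [stepsBefore, stepTimes_top, encard_iUnion_of_directed directed]
  rfl

theorem zero_mem_stepTimes_prep : 0 ∈ stepTimes A B (n + 1) (prep s τ) ↔ s ∈ A ∧ s ∉ B := by
  simp [stepTimes, prep]

theorem succ_mem_stepTimes_prep {i : ℕ} :
    i + 1 ∈ stepTimes A B (n + 1) (prep s τ) ↔ s ∉ B ∧ i ∈ stepTimes A B n τ := by
  have avoid_succ : (∀ j ≤ i + 1, prep s τ j ∉ B) ↔ s ∉ B ∧ ∀ j ≤ i, τ j ∉ B := by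
    simp only [← Nat.lt_succ_iff, Nat.forall_lt_succ_left (n := i + 1)]
    rfl
  have lt_succ : ((i + 1 : ℕ) : ℕ∞) < n + 1 ↔ (i : ℕ∞) < n := by
    simp
  rw [stepTimes, mem_ofPred_eq, avoid_succ, lt_succ]
  exact ⟨fun ⟨hi, hA, hs, hB⟩ => ⟨hs, hi, hA, hB⟩, fun ⟨hs, hi, hA, hB⟩ => ⟨hi, hA, hs, hB⟩⟩

theorem stepsBefore_prep_of_mem (hs : s ∈ B) : stepsBefore A B (n + 1) (prep s τ) = 0 :=
  encard_eq_zero.mpr (eq_empty_of_forall_notMem fun _ hi => hi.2.2 0 (Nat.zero_le _) hs)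

theorem stepsBefore_prep_of_mem_of_notMem (hsA : s ∈ A) (hsB : s ∉ B) :
    stepsBefore A B (n + 1) (prep s τ) = stepsBefore A B n τ + 1 := by
  have stepTimes_prep :
      stepTimes A B (n + 1) (prep s τ) = insert 0 (Nat.succ '' stepTimes A B n τ) := by
    ext (_ | i)
    · simp [zero_mem_stepTimes_prep, hsA, hsB]
    · simp [succ_mem_stepTimes_prep, hsB]
  rw [stepsBefore, stepTimes_prep, encard_insert_of_notMem (by simp),
    Nat.succ_injective.encard_image, stepsBefore]

theorem stepsBefore_prep_of_notMem_of_notMem (hsA : s ∉ A) (hsB : s ∉ B) :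
    stepsBefore A B (n + 1) (prep s τ) = stepsBefore A B n τ := by
  have stepTimes_prep : stepTimes A B (n + 1) (prep s τ) = Nat.succ '' stepTimes A B n τ := by
    ext (_ | i)
    · simp [zero_mem_stepTimes_prep, hsA]
    · simp [succ_mem_stepTimes_prep, hsB]
  rw [stepsBefore, stepTimes_prep, Nat.succ_injective.encard_image, stepsBefore]

theorem measurable_stepsBefore [MeasurableSpace α] (hA : MeasurableSet A) (hB : MeasurableSet B)
    (n : ℕ∞) : Measurable (stepsBefore A B n) := by
  refine measurable_encard.comp (measurable_set_iff.mpr fun i => ?_)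
  have mem_A : Measurable fun τ : ℕ → α => τ i ∈ A := hA.mem.comp (measurable_pi_apply i)
  have notMem_B (j : ℕ) : Measurable fun τ : ℕ → α => τ j ∉ B :=
    hB.mem.not.comp (measurable_pi_apply j)
  exact measurable_const.and (mem_A.and (.forall fun j => .forall fun _ => notMem_B j))

end StepTimes

section StepLaw

variable {F : Kernel S S} {P : Kernel S (ℕ → S)} {A B : Set S}

theorem measurable_uncurry_prep : Measurable (Function.uncurry (prep (S := S))) := by
  refine measurable_pi_lambda _ fun i => ?_
  cases i with
  | zero => exact measurable_fst
  | succ i => exact (measurable_pi_apply i).comp measurable_snd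

theorem measurable_prep (s : S) : Measurable (prep s) :=
  measurable_uncurry_prep.of_uncurry_left

/-- The law of the trace that includes its initial state, when `P s` is the law of the trace after
the initial state `s`. -/
noncomputable def traceKernel (P : Kernel S (ℕ → S)) [IsSFiniteKernel P] :
    Kernel S (ℕ → S) where
  toFun s := (P s).map (prep s)
  measurable' := Measure.measurable_of_measurable_coe _ fun E hE => by
    simp only [Measure.map_apply (measurable_prep _) hE]
    exact Kernel.measurable_kernel_prodMk_left (measurable_uncurry_prep hE)

instance [IsMarkovKernel P] : IsMarkovKernel (traceKernel P) :=
  ⟨fun s => Measure.isProbabilityMeasure_map (measurable_prep s).aemeasurable⟩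

/-- The law of the number of `A`-steps before time `n` and before reaching `B`, as a function of the
initial state. It is meaningful for measurable `A` and `B` only, as `Kernel.map` along a
non-measurable function is `0`. -/
noncomputable def stepLaw (P : Kernel S (ℕ → S)) [IsSFiniteKernel P] (A B : Set S) (n : ℕ∞) :
    Kernel S ℕ∞ :=
  (traceKernel P).map (stepsBefore A B n)

theorem isMarkovKernel_stepLaw [IsMarkovKernel P] (hA : MeasurableSet A) (hB : MeasurableSet B)
    (n : ℕ∞) : IsMarkovKernel (stepLaw P A B n) :=
  Kernel.IsMarkovKernel.map _ (measurable_stepsBefore hA hB n)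

theorem stepLaw_apply [IsSFiniteKernel P] (hA : MeasurableSet A) (hB : MeasurableSet B)
    (n : ℕ∞) (s : S) :
    stepLaw P A B n s = (P s).map fun ω => stepsBefore A B n (prep s ω) := by
  have hn := measurable_stepsBefore hA hB n
  rw [stepLaw, Kernel.map_apply _ hn]
  exact Measure.map_map hn (measurable_prep s)

theorem stepLaw_zero [IsMarkovKernel P] (hA : MeasurableSet A) (hB : MeasurableSet B) (s : S) :
    stepLaw P A B 0 s = Measure.dirac 0 := by
  simp [stepLaw_apply hA hB, stepsBefore_zero]

theorem nextTimeD_stepLaw [IsSFiniteKernel P] (hP : P = traceKernel P ∘ₖ F)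
    (hA : MeasurableSet A) (hB : MeasurableSet B) (n : ℕ∞) (s : S) :
    nextTimeD F (stepLaw P A B n) s = (P s).map (stepsBefore A B n) :=
  calc nextTimeD F (stepLaw P A B n) s = (stepLaw P A B n ∘ₖ F) s := rfl
    _ = (traceKernel P ∘ₖ F).map (stepsBefore A B n) s := by rw [stepLaw, Kernel.map_comp]
    _ = (P s).map (stepsBefore A B n) := by
        rw [← hP, Kernel.map_apply _ (measurable_stepsBefore hA hB n)]

theorem stepLaw_add_one [IsMarkovKernel P] (hP : P = traceKernel P ∘ₖ F)
    (hA : MeasurableSet A) (hB : MeasurableSet B) (n : ℕ∞) :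
    ⇑(stepLaw P A B (n + 1)) = KP F A B (stepLaw P A B n) := by
  ext1 s
  rw [stepLaw_apply hA hB, KP, nextTimeD_stepLaw hP hA hB]
  split_ifs with hsB hsA
  · simp [stepsBefore_prep_of_mem hsB]
  · simp only [stepsBefore_prep_of_mem_of_notMem hsA hsB]
    rw [shift1, Measure.map_map .of_discrete (measurable_stepsBefore hA hB n), Function.comp_def]
  · simp only [stepsBefore_prep_of_notMem_of_notMem hsA hsB]

theorem KP_stepLaw_top [IsMarkovKernel P] (hP : P = traceKernel P ∘ₖ F)
    (hA : MeasurableSet A) (hB : MeasurableSet B) :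
    KP F A B (stepLaw P A B ⊤) = stepLaw P A B ⊤ := by
  rw [← stepLaw_add_one hP hA hB, top_add]

theorem stepLaw_natCast_stochLE [IsMarkovKernel P] (hP : P = traceKernel P ∘ₖ F)
    (hA : MeasurableSet A) (hB : MeasurableSet B) {r : S → Measure ℕ∞}
    [∀ s, IsProbabilityMeasure (r s)] (hr : Measurable r)
    (hprefix : ∀ s, stochLE (KP F A B r s) (r s)) (n : ℕ) (s : S) :
    stochLE (stepLaw P A B n s) (r s) := by
  induction n generalizing s with
  | zero => simpa only [Nat.cast_zero, stepLaw_zero hA hB] using dirac_zero_stochLE (r s)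
  | succ n ih =>
    rw [Nat.cast_succ, stepLaw_add_one hP hA hB]
    exact fun a => (KP_mono hr ih s a).trans (hprefix s a)

theorem stepLaw_top_stochLE [IsMarkovKernel P] (hP : P = traceKernel P ∘ₖ F)
    (hA : MeasurableSet A) (hB : MeasurableSet B) {r : S → Measure ℕ∞}
    [∀ s, IsProbabilityMeasure (r s)] (hr : Measurable r)
    (hprefix : ∀ s, stochLE (KP F A B r s) (r s)) (s : S) :
    stochLE (stepLaw P A B ⊤ s) (r s) := by
  have hmeas := measurable_stepsBefore hA hB
  rw [stepLaw, Kernel.map_apply _ (hmeas ⊤), funext stepsBefore_top]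
  refine map_iSup_stochLE (fun n => hmeas n) (stepsBefore_mono.comp Nat.mono_cast) fun n => ?_
  rw [← Kernel.map_apply _ (hmeas n)]
  exact stepLaw_natCast_stochLE hP hA hB hr hprefix n s

theorem stepLaw_top_singleton [IsSFiniteKernel P] (hA : MeasurableSet A) (hB : MeasurableSet B)
    (s : S) (m : ℕ∞) : stepLaw P A B ⊤ s {m} = P s {ω | stepCount A B s ω = m} := by
  have hmeas : Measurable fun ω => stepsBefore A B ⊤ (prep s ω) :=
    (measurable_stepsBefore hA hB ⊤).comp (measurable_prep s)
  simp only [stepLaw_apply hA hB, Measure.map_apply hmeas .of_discrete,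
    stepCount_eq_stepsBefore_top]
  rfl

end StepLaw

/-- The least fixed point `μK_P` of `K_P` (in the ω-cpo of measurable families of
distributions over `ℕ∞`, ordered pointwise by the stochastic order) satisfies
`ℙ_{s₀}[step^{(A,B)}_{s₀} = m] = (μK_P)(s₀)({m})` for all `s₀ ∈ S` and `m ∈ ℕ∞`. -/
theorem lfp_KP_eq_step_distribution
    (F : Kernel S S) [IsMarkovKernel F]
    (P : Kernel S (ℕ → S)) [IsMarkovKernel P]
    (hP : ∀ s₀ : S, (P s₀ : Measure (ℕ → S)) = (F s₀).bind fun s₁ => (P s₁).map (prep s₁))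
    (A B : Set S) (hA : MeasurableSet A) (hB : MeasurableSet B) :
    ∃ μK : S → Measure ℕ∞,
      (∀ s, IsProbabilityMeasure (μK s)) ∧ Measurable μK ∧
      KP F A B μK = μK ∧
      (∀ r : S → Measure ℕ∞, (∀ s, IsProbabilityMeasure (r s)) → Measurable r →
        KP F A B r = r → ∀ s, stochLE (μK s) (r s)) ∧
      ∀ (s₀ : S) (m : ℕ∞), P s₀ {ω | stepCount A B s₀ ω = m} = μK s₀ {m} := by
  have hP' : P = traceKernel P ∘ₖ F := Kernel.ext hP
  have : IsMarkovKernel (stepLaw P A B ⊤) := isMarkovKernel_stepLaw hA hB ⊤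
  refine ⟨stepLaw P A B ⊤, inferInstance, Kernel.measurable _, KP_stepLaw_top hP' hA hB, ?_,
    fun s₀ m => (stepLaw_top_singleton hA hB s₀ m).symm⟩
  intro r _ hr hfix
  exact stepLaw_top_stochLE hP' hA hB hr fun s _ => by rw [hfix]
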